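/- Let a > √3, Δt, Δx > 0, λ = Δt/Δx, and τ > 0. Let M_L⁻, M_L⁺, M_R⁻, M_R⁺ ∈ ℝ⁵ each be of two-node Gaussian-EQMOM form (positive weights, σ > 0), with interface speeds δ_L± and δ_R± and HLL fluxes F̂_L, F̂_R as in the HLL construction, and cell average M̄ = ½(M_L⁺ + M_R⁻). Let S denote the BGK source, and suppose μ > 0 is such that H₂(M_L⁺ + μ S(M_L⁺)) and H₂(M_R⁻ + μ S(M_R⁻)) are positive semidefinite. Define M_new = M̄ − λ(F̂_R − F̂_L) + (Δt/2)(S(M_L⁺) + S(M_R⁻)). If λ(δ_L⁺ − δ_L⁻) + Δt/μ < ½ and λ(δ_R⁺ − δ_R⁻) + Δt/μ < ½, then H₂(M_new) is positive definite. -/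

import Mathlib

open MeasureTheory Real

/-- The `k`-th moment `Δ_k(v, s²)` of the normal distribution with mean `v` and variance `s²`. -/
noncomputable def gaussMoment (v s : ℝ) (k : ℕ) : ℝ :=
  ∫ x : ℝ, x ^ k * ((2 * π * s ^ 2) ^ (-(1 : ℝ) / 2) * Real.exp (-(x - v) ^ 2 / (2 * s ^ 2)))

/-- The `3×3` Hankel matrix `H₂(c)` of a vector `c ∈ ℝ⁵`, with `(j,k)` entry `c_{j+k}`. -/
noncomputable def hankel2 (c : Fin 5 → ℝ) : Matrix (Fin 3) (Fin 3) ℝ :=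
  Matrix.of fun j k => c ⟨j.1 + k.1, by have := j.isLt; have := k.isLt; omega⟩

/-- Parameters of a two-node Gaussian-EQMOM state: positive weights and positive `σ`. -/
structure EqmomParams where
  r1 : ℝ
  r2 : ℝ
  v1 : ℝ
  v2 : ℝ
  sig : ℝ
  hr1 : 0 < r1
  hr2 : 0 < r2
  hsig : 0 < sig

/-- Moment vector `M_k = ρ₁Δ_k(v₁,σ²) + ρ₂Δ_k(v₂,σ²)`, `k = 0,…,4`. -/
noncomputable def EqmomParams.M (W : EqmomParams) : Fin 5 → ℝ :=
  fun k => W.r1 * gaussMoment W.v1 W.sig k.1 + W.r2 * gaussMoment W.v2 W.sig k.1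

/-- Flux vector `F(M) = (M₁,…,M₄,M₅)` with `M₅ = ρ₁Δ₅(v₁,σ²) + ρ₂Δ₅(v₂,σ²)`. -/
noncomputable def EqmomParams.F (W : EqmomParams) : Fin 5 → ℝ :=
  fun k => W.r1 * gaussMoment W.v1 W.sig (k.1 + 1) + W.r2 * gaussMoment W.v2 W.sig (k.1 + 1)

/-- Wave speed `δ⁺(M) = max{v₁+aσ, v₂+aσ, 0}`. -/
noncomputable def EqmomParams.dp (W : EqmomParams) (a : ℝ) : ℝ :=
  max (max (W.v1 + a * W.sig) (W.v2 + a * W.sig)) 0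

/-- Wave speed `δ⁻(M) = min{v₁−aσ, v₂−aσ, 0}`. -/
noncomputable def EqmomParams.dm (W : EqmomParams) (a : ℝ) : ℝ :=
  min (min (W.v1 - a * W.sig) (W.v2 - a * W.sig)) 0

/-- HLL numerical flux
`F̂(M⁻,M⁺) = (δ̂⁺F(M⁻) − δ̂⁻F(M⁺) + δ̂⁺δ̂⁻(M⁺ − M⁻))/(δ̂⁺ − δ̂⁻)`. -/
noncomputable def hllFlux (dp dm : ℝ) (Mm Mp Fm Fp : Fin 5 → ℝ) : Fin 5 → ℝ :=
  fun k => (dp * Fm k - dm * Fp k + dp * dm * (Mp k - Mm k)) / (dp - dm)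

/-- BGK source `S(M) = (0,0,0,(ρΔ₃(U,θ) − M₃)/τ, (ρΔ₄(U,θ) − M₄)/τ)` with `ρ = M₀`,
`U = M₁/M₀`, `θ = M₂/M₀ − U²`. -/
noncomputable def bgkSource (τ : ℝ) (M : Fin 5 → ℝ) : Fin 5 → ℝ :=
  ![0, 0, 0,
    (M 0 * ((M 1 / M 0) ^ 3 + 3 * (M 1 / M 0) * (M 2 / M 0 - (M 1 / M 0) ^ 2)) - M 3) / τ,
    (M 0 * ((M 1 / M 0) ^ 4 + 6 * (M 1 / M 0) ^ 2 * (M 2 / M 0 - (M 1 / M 0) ^ 2)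
        + 3 * (M 2 / M 0 - (M 1 / M 0) ^ 2) ^ 2) - M 4) / τ]

lemma gm_integrable (v s : ℝ) (hs : 0 < s) (k : ℕ) : Integrable (fun x : ℝ =>
    x ^ k * ((2 * π * s ^ 2) ^ (-(1 : ℝ) / 2) * Real.exp (-(x - v) ^ 2 / (2 * s ^ 2)))) := by
  have hb : 0 < 1 / (2 * s ^ 2) := by positivity
  have h1 : ∀ n : ℕ, Integrable (fun y : ℝ => y ^ n * Real.exp (-(1 / (2 * s ^ 2)) * y ^ 2)) := by
    intro n
    have := integrable_rpow_mul_exp_neg_mul_sq hb (s := n)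
      (by have : (0 : ℝ) ≤ n := Nat.cast_nonneg n
          linarith)
    simpa only [Real.rpow_natCast] using this
  have h2 : Integrable (fun y : ℝ => (y + v) ^ k * Real.exp (-(1 / (2 * s ^ 2)) * y ^ 2)) := by
    have : (fun y : ℝ => (y + v) ^ k * Real.exp (-(1 / (2 * s ^ 2)) * y ^ 2)) =
        fun y => ∑ m ∈ Finset.range (k + 1),
          (v ^ (k - m) * (k.choose m : ℝ)) * (y ^ m * Real.exp (-(1 / (2 * s ^ 2)) * y ^ 2)) := by
      funext y
      rw [add_pow, Finset.sum_mul]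
      refine Finset.sum_congr rfl fun m _ => ?_
      ring
    rw [this]
    exact integrable_finsetSum _ fun m _ => (h1 m).const_mul _
  have h3 := (h2.comp_sub_right v).const_mul ((2 * π * s ^ 2) ^ (-(1 : ℝ) / 2))
  refine h3.congr (Filter.Eventually.of_forall fun x => ?_)
  have : -(1 / (2 * s ^ 2)) * (x - v) ^ 2 = -(x - v) ^ 2 / (2 * s ^ 2) := by ring
  simp only [this, sub_add_cancel]
  ring

lemma gm_zero (v s : ℝ) (hs : 0 < s) : gaussMoment v s 0 = 1 := by
  have h : ∫ x : ℝ, Real.exp (-(1 / (2 * s ^ 2)) * (x - v) ^ 2) = √(π / (1 / (2 * s ^ 2))) := by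
    rw [integral_sub_right_eq_self (fun x : ℝ => Real.exp (-(1 / (2 * s ^ 2)) * x ^ 2)) v]
    exact integral_gaussian _
  have e : ∀ x : ℝ, -(x - v) ^ 2 / (2 * s ^ 2) = -(1 / (2 * s ^ 2)) * (x - v) ^ 2 := by
    intro x; ring
  unfold gaussMoment
  simp only [pow_zero, one_mul, e]
  rw [integral_const_mul, h]
  have h2 : π / (1 / (2 * s ^ 2)) = 2 * π * s ^ 2 := by field_simp
  have hp : 0 < 2 * π * s ^ 2 := by positivity
  rw [h2, Real.sqrt_eq_rpow, ← Real.rpow_add hp]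
  norm_num

lemma gm_rec (v s : ℝ) (hs : 0 < s) (k : ℕ) :
    gaussMoment v s (k + 1) = v * gaussMoment v s k + k * s ^ 2 * gaussMoment v s (k - 1) := by
  set C := (2 * π * s ^ 2) ^ (-(1 : ℝ) / 2) with hC
  have hd : ∀ x : ℝ, HasDerivAt
      (fun x : ℝ => x ^ k * (C * Real.exp (-(x - v) ^ 2 / (2 * s ^ 2))))
      (k * (x ^ (k - 1) * (C * Real.exp (-(x - v) ^ 2 / (2 * s ^ 2))))
        + (v / s ^ 2 * (x ^ k * (C * Real.exp (-(x - v) ^ 2 / (2 * s ^ 2))))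
        - 1 / s ^ 2 * (x ^ (k + 1) * (C * Real.exp (-(x - v) ^ 2 / (2 * s ^ 2)))))) x := by
    intro x
    have h1 : HasDerivAt (fun x : ℝ => -(x - v) ^ 2 / (2 * s ^ 2))
        (-(2 * (x - v)) / (2 * s ^ 2)) x := by
      have := ((((hasDerivAt_id x).sub_const v).pow 2).neg).div_const (2 * s ^ 2)
      simpa using this
    have h2 := (hasDerivAt_pow k x).mul (h1.exp.const_mul C)
    refine h2.congr_deriv ?_
    field_simp
    ring
  have i0 := gm_integrable v s hs (k - 1)
  have i1 := gm_integrable v s hs k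
  have i2 := gm_integrable v s hs (k + 1)
  rw [← hC] at i0 i1 i2
  have j0 := i0.const_mul (k : ℝ)
  have j1 := i1.const_mul (v / s ^ 2)
  have j2 := i2.const_mul (1 / s ^ 2)
  have j3 : Integrable (fun x : ℝ =>
      v / s ^ 2 * (x ^ k * (C * Real.exp (-(x - v) ^ 2 / (2 * s ^ 2))))
        - 1 / s ^ 2 * (x ^ (k + 1) * (C * Real.exp (-(x - v) ^ 2 / (2 * s ^ 2))))) := j1.sub j2
  have key := integral_eq_zero_of_hasDerivAt_of_integrable hd (j0.add j3) i1
  rw [integral_add j0 j3, integral_sub j1 j2, integral_const_mul, integral_const_mul,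
    integral_const_mul] at key
  unfold gaussMoment
  rw [← hC]
  revert key
  generalize (∫ x : ℝ, x ^ (k + 1) * (C * Real.exp (-(x - v) ^ 2 / (2 * s ^ 2)))) = I2
  generalize (∫ x : ℝ, x ^ k * (C * Real.exp (-(x - v) ^ 2 / (2 * s ^ 2)))) = I1
  generalize (∫ x : ℝ, x ^ (k - 1) * (C * Real.exp (-(x - v) ^ 2 / (2 * s ^ 2)))) = I0
  intro key
  field_simp at key
  linarith

lemma gm_vals (v s : ℝ) (hs : 0 < s) :
    gaussMoment v s 0 = 1 ∧ gaussMoment v s 1 = v ∧ gaussMoment v s 2 = v ^ 2 + s ^ 2 ∧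
    gaussMoment v s 3 = v ^ 3 + 3 * v * s ^ 2 ∧
    gaussMoment v s 4 = v ^ 4 + 6 * v ^ 2 * s ^ 2 + 3 * s ^ 4 ∧
    gaussMoment v s 5 = v ^ 5 + 10 * v ^ 3 * s ^ 2 + 15 * v * s ^ 4 := by
  have h0 := gm_zero v s hs
  have h1 := gm_rec v s hs 0
  have h2 := gm_rec v s hs 1
  have h3 := gm_rec v s hs 2
  have h4 := gm_rec v s hs 3
  have h5 := gm_rec v s hs 4
  norm_num at h1 h2 h3 h4 h5
  rw [h0] at h1
  rw [h0, h1] at h2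
  rw [h1, h2] at h3
  rw [h2, h3] at h4
  rw [h3, h4] at h5
  refine ⟨h0, ?_, ?_, ?_, ?_, ?_⟩
  · rw [h1]; ring
  · rw [h2]; ring
  · rw [h3]; ring
  · rw [h4]; ring
  · rw [h5]; ring

/-- quadratic form of the Hankel matrix -/
def hq (x y z : ℝ) (c : Fin 5 → ℝ) : ℝ :=
  c 0 * x ^ 2 + 2 * c 1 * (x * y) + c 2 * (y ^ 2 + 2 * x * z) + 2 * c 3 * (y * z) + c 4 * z ^ 2

lemma hq_eq (c : Fin 5 → ℝ) (u : Fin 3 → ℝ) :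
    star u ⬝ᵥ (hankel2 c).mulVec u = hq (u 0) (u 1) (u 2) c := by
  simp [hankel2, dotProduct, Matrix.mulVec, Fin.sum_univ_three, hq]
  ring

lemma hankel_posDef (c : Fin 5 → ℝ)
    (h : ∀ x y z : ℝ, (x ≠ 0 ∨ y ≠ 0 ∨ z ≠ 0) → 0 < hq x y z c) : (hankel2 c).PosDef := by
  refine Matrix.PosDef.of_dotProduct_mulVec_pos ?_ ?_
  · ext i j
    simp [hankel2, add_comm]
  · intro u hu
    rw [hq_eq]
    apply h
    by_contra! hh
    apply hu
    funext i
    fin_cases i <;> simp [hh]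

lemma hankel_nonneg (c : Fin 5 → ℝ) (h : (hankel2 c).PosSemidef) (x y z : ℝ) :
    0 ≤ hq x y z c := by
  have := h.dotProduct_mulVec_nonneg ![x, y, z]
  rw [hq_eq] at this
  simpa using this

/-- moment vectors of one Gaussian -/
noncomputable def gv (v s : ℝ) : Fin 5 → ℝ := fun k => gaussMoment v s k.1
noncomputable def gw (v s : ℝ) : Fin 5 → ℝ := fun k => gaussMoment v s (k.1 + 1)

lemma gv_eq (v s x y z : ℝ) (hs : 0 < s) : hq x y z (gv v s) =
    (x + y * v + z * v ^ 2 + z * s ^ 2) ^ 2 + ((y + 2 * z * v) * s) ^ 2 + 2 * (z * s ^ 2) ^ 2 := by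
  obtain ⟨h0, h1, h2, h3, h4, h5⟩ := gm_vals v s hs
  simp [hq, gv, h0, h1, h2, h3, h4]
  ring

lemma gw_eq (v s x y z : ℝ) (hs : 0 < s) : hq x y z (gw v s) =
    v * hq x y z (gv v s) + s * (2 * ((y + 2 * z * v) * s) *
      ((x + y * v + z * v ^ 2 + z * s ^ 2) + 2 * (z * s ^ 2))) := by
  obtain ⟨h0, h1, h2, h3, h4, h5⟩ := gm_vals v s hs
  rw [gv_eq v s x y z hs]
  simp [hq, gw, h1, h2, h3, h4, h5]
  ring

lemma gv_pos (v s x y z : ℝ) (hs : 0 < s) (h : x ≠ 0 ∨ y ≠ 0 ∨ z ≠ 0) :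
    0 < hq x y z (gv v s) := by
  rw [gv_eq v s x y z hs]
  by_cases hz : z = 0
  · by_cases hy : y = 0
    · have hx : x ≠ 0 := by tauto
      subst hz hy
      simp
      positivity
    · subst hz
      have : (y * s) ≠ 0 := by positivity
      simp only [mul_zero, zero_mul, add_zero]
      positivity
  · positivity

lemma alg (a e f g : ℝ) (ha : Real.sqrt 3 < a) :
    |2 * f * (e + 2 * g)| ≤ a * (e ^ 2 + f ^ 2 + 2 * g ^ 2) := by
  have hr : 0 ≤ Real.sqrt 3 := Real.sqrt_nonneg 3
  have h3 : Real.sqrt 3 ^ 2 = 3 := Real.sq_sqrt (by norm_num)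
  have hr' : 0 < Real.sqrt 3 := Real.sqrt_pos.mpr (by norm_num)
  set r := Real.sqrt 3
  have hN : 0 ≤ e ^ 2 + f ^ 2 + 2 * g ^ 2 := by positivity
  have h1 : r * (e ^ 2 + f ^ 2 + 2 * g ^ 2) ≤ a * (e ^ 2 + f ^ 2 + 2 * g ^ 2) :=
    mul_le_mul_of_nonneg_right ha.le hN
  have h2 : |2 * f * (e + 2 * g)| ≤ r * (e ^ 2 + f ^ 2 + 2 * g ^ 2) := by
    rw [abs_le]
    constructor
    · have : 0 ≤ r * (r * (e ^ 2 + f ^ 2 + 2 * g ^ 2) + 2 * f * (e + 2 * g)) := by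
        nlinarith [sq_nonneg (r * f + (e + 2 * g)), sq_nonneg (e - g)]
      have := nonneg_of_mul_nonneg_right this hr'
      linarith
    · have : 0 ≤ r * (r * (e ^ 2 + f ^ 2 + 2 * g ^ 2) - 2 * f * (e + 2 * g)) := by
        nlinarith [sq_nonneg (r * f - (e + 2 * g)), sq_nonneg (e - g)]
      have := nonneg_of_mul_nonneg_right this hr'
      linarith
  linarith

lemma g_bound (a v s x y z : ℝ) (ha : Real.sqrt 3 < a) (hs : 0 < s) :
    hq x y z (gw v s) ≤ (v + a * s) * hq x y z (gv v s) ∧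
    (v - a * s) * hq x y z (gv v s) ≤ hq x y z (gw v s) := by
  rw [gw_eq v s x y z hs]
  have h := alg a (x + y * v + z * v ^ 2 + z * s ^ 2) ((y + 2 * z * v) * s) (z * s ^ 2) ha
  rw [← gv_eq v s x y z hs, abs_le] at h
  have h1 := mul_le_mul_of_nonneg_left h.1 hs.le
  have h2 := mul_le_mul_of_nonneg_left h.2 hs.le
  constructor <;> nlinarith

lemma M_hq (W : EqmomParams) (x y z : ℝ) : hq x y z W.M =
    W.r1 * hq x y z (gv W.v1 W.sig) + W.r2 * hq x y z (gv W.v2 W.sig) := by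
  simp only [hq, EqmomParams.M, gv]; ring

lemma F_hq (W : EqmomParams) (x y z : ℝ) : hq x y z W.F =
    W.r1 * hq x y z (gw W.v1 W.sig) + W.r2 * hq x y z (gw W.v2 W.sig) := by
  simp only [hq, EqmomParams.F, gw]; ring

lemma W_facts (W : EqmomParams) (a x y z : ℝ) (ha : Real.sqrt 3 < a)
    (h : x ≠ 0 ∨ y ≠ 0 ∨ z ≠ 0) :
    0 < hq x y z W.M ∧ (∀ d, W.dp a ≤ d → hq x y z W.F ≤ d * hq x y z W.M) ∧
    (∀ d, d ≤ W.dm a → d * hq x y z W.M ≤ hq x y z W.F) := by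
  have p1 := gv_pos W.v1 W.sig x y z W.hsig h
  have p2 := gv_pos W.v2 W.sig x y z W.hsig h
  have b1 := g_bound a W.v1 W.sig x y z ha W.hsig
  have b2 := g_bound a W.v2 W.sig x y z ha W.hsig
  have r1 := W.hr1
  have r2 := W.hr2
  rw [M_hq, F_hq]
  refine ⟨by positivity, fun d hd => ?_, fun d hd => ?_⟩
  · have e1 : W.v1 + a * W.sig ≤ d :=
      le_trans (le_trans (le_max_left _ _) (le_max_left _ _)) hd
    have e2 : W.v2 + a * W.sig ≤ d :=
      le_trans (le_trans (le_max_right _ _) (le_max_left _ _)) hd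
    have f1 := b1.1.trans (mul_le_mul_of_nonneg_right e1 p1.le)
    have f2 := b2.1.trans (mul_le_mul_of_nonneg_right e2 p2.le)
    have g1 := mul_le_mul_of_nonneg_left f1 r1.le
    have g2 := mul_le_mul_of_nonneg_left f2 r2.le
    linarith
  · have e1 : d ≤ W.v1 - a * W.sig :=
      hd.trans (le_trans (min_le_left _ _) (min_le_left _ _))
    have e2 : d ≤ W.v2 - a * W.sig :=
      hd.trans (le_trans (min_le_left _ _) (min_le_right _ _))
    have f1 := (mul_le_mul_of_nonneg_right e1 p1.le).trans b1.2
    have f2 := (mul_le_mul_of_nonneg_right e2 p2.le).trans b2.2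
    have g1 := mul_le_mul_of_nonneg_left f1 r1.le
    have g2 := mul_le_mul_of_nonneg_left f2 r2.le
    linarith

lemma speeds (W W' : EqmomParams) (a : ℝ) (ha : Real.sqrt 3 < a) :
    0 ≤ max (W.dp a) (W'.dp a) ∧ min (W.dm a) (W'.dm a) ≤ 0 ∧
    0 < max (W.dp a) (W'.dp a) - min (W.dm a) (W'.dm a) := by
  have h0 : 0 ≤ W.dp a := le_max_right _ _
  have h0' : W.dm a ≤ 0 := min_le_right _ _
  have h1 : W.v1 + a * W.sig ≤ W.dp a := le_trans (le_max_left _ _) (le_max_left _ _)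
  have h2 : W.dm a ≤ W.v1 - a * W.sig := le_trans (min_le_left _ _) (min_le_left _ _)
  have hp := le_max_left (W.dp a) (W'.dp a)
  have hm := min_le_left (W.dm a) (W'.dm a)
  have : 0 < a * W.sig := mul_pos (lt_of_le_of_lt (Real.sqrt_nonneg 3) ha) W.hsig
  refine ⟨by linarith, by linarith, by linarith⟩

lemma hll_hq (dp dm x y z : ℝ) (A B C D : Fin 5 → ℝ) : hq x y z (hllFlux dp dm A B C D) =
    (dp * hq x y z C - dm * hq x y z D + dp * dm * (hq x y z B - hq x y z A)) / (dp - dm) := by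
  simp only [hq, hllFlux]; ring

lemma flux_bounds (dp dm qm qp fm fp : ℝ) (h0 : 0 ≤ dp) (h1 : dm ≤ 0) (h2 : 0 < dp - dm)
    (hm1 : fm ≤ dp * qm) (hm2 : dm * qm ≤ fm) (hp1 : fp ≤ dp * qp) (hp2 : dm * qp ≤ fp) :
    (dp * fm - dm * fp + dp * dm * (qp - qm)) / (dp - dm) ≤ dp * qm ∧
    dm * qp ≤ (dp * fm - dm * fp + dp * dm * (qp - qm)) / (dp - dm) := by
  rw [div_le_iff₀ h2, le_div_iff₀ h2]
  have a1 := mul_le_mul_of_nonneg_left hm1 h0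
  have a2 := mul_le_mul_of_nonneg_left hm2 h0
  have a3 := mul_le_mul_of_nonpos_left hp1 h1
  have a4 := mul_le_mul_of_nonpos_left hp2 h1
  constructor <;> nlinarith

lemma cell (lam d D Δt μ q s : ℝ) (hl : 0 ≤ lam) (hd : d ≤ D) (hΔt : 0 < Δt) (hμ : 0 < μ)
    (hq : 0 < q) (hs : 0 ≤ q + μ * s) (hc : lam * D + Δt / μ < 1 / 2) :
    0 < q / 2 - lam * (d * q) + Δt / 2 * s := by
  have e : q / 2 - lam * (d * q) + Δt / 2 * s =
      (1 / 2 - lam * d - Δt / μ / 2) * q + Δt / μ / 2 * (q + μ * s) := by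
    field_simp
    ring
  have t : 0 < Δt / μ := by positivity
  have := mul_le_mul_of_nonneg_left hd hl
  rw [e]
  have : 0 < (1 / 2 - lam * d - Δt / μ / 2) * q := mul_pos (by linarith) hq
  positivity

/-- realizability of the explicit-BGK HLL finite-volume update for the two-node
Gaussian-EQMOM closure.  If `μ > 0` keeps `H₂(M_L⁺ + μS(M_L⁺))` and `H₂(M_R⁻ + μS(M_R⁻))`
positive semidefinite, and `λ(δ⁺ − δ⁻) + Δt/μ < 1/2` at both interfaces (`λ = Δt/Δx`), then
`H₂(M_new)` is positive definite, where
`M_new = ½(M_L⁺ + M_R⁻) − λ(F̂_R − F̂_L) + (Δt/2)(S(M_L⁺) + S(M_R⁻))`. -/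
theorem eqmom_hll_bgk_update_posDef (a Δt Δx lam τ μ : ℝ)
    (ha : Real.sqrt 3 < a) (hΔt : 0 < Δt) (hΔx : 0 < Δx) (hlam : lam = Δt / Δx)
    (hτ : 0 < τ) (hμ : 0 < μ)
    (WLm WLp WRm WRp : EqmomParams)
    (dLp dLm dRp dRm : ℝ)
    (hdLp : dLp = max (WLm.dp a) (WLp.dp a))
    (hdLm : dLm = min (WLm.dm a) (WLp.dm a))
    (hdRp : dRp = max (WRm.dp a) (WRp.dp a))
    (hdRm : dRm = min (WRm.dm a) (WRp.dm a))
    (FL FR : Fin 5 → ℝ)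
    (hFL : FL = hllFlux dLp dLm WLm.M WLp.M WLm.F WLp.F)
    (hFR : FR = hllFlux dRp dRm WRm.M WRp.M WRm.F WRp.F)
    (hrealL : (hankel2 (fun k => WLp.M k + μ * bgkSource τ WLp.M k)).PosSemidef)
    (hrealR : (hankel2 (fun k => WRm.M k + μ * bgkSource τ WRm.M k)).PosSemidef)
    (hCFL_L : lam * (dLp - dLm) + Δt / μ < 1 / 2)
    (hCFL_R : lam * (dRp - dRm) + Δt / μ < 1 / 2) :
    (hankel2 (fun k => (WLp.M k + WRm.M k) / 2 - lam * (FR k - FL k)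
        + Δt / 2 * (bgkSource τ WLp.M k + bgkSource τ WRm.M k))).PosDef := by
  have hl : 0 ≤ lam := by rw [hlam]; positivity
  apply hankel_posDef
  intro x y z h
  obtain ⟨qA, uA, lA⟩ := W_facts WLp a x y z ha h
  obtain ⟨qB, uB, lB⟩ := W_facts WRm a x y z ha h
  obtain ⟨-, uC, lC⟩ := W_facts WLm a x y z ha h
  obtain ⟨-, uD, lD⟩ := W_facts WRp a x y z ha h
  obtain ⟨sL1, sL2, sL3⟩ := speeds WLm WLp a ha
  obtain ⟨sR1, sR2, sR3⟩ := speeds WRm WRp a ha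
  have hL := hankel_nonneg _ hrealL x y z
  have hR := hankel_nonneg _ hrealR x y z
  have eS : ∀ M : Fin 5 → ℝ, hq x y z (fun k => M k + μ * bgkSource τ M k) =
      hq x y z M + μ * hq x y z (bgkSource τ M) := by
    intro M; simp only [hq]; ring
  rw [eS] at hL hR
  have eN : hq x y z (fun k => (WLp.M k + WRm.M k) / 2 - lam * (FR k - FL k)
        + Δt / 2 * (bgkSource τ WLp.M k + bgkSource τ WRm.M k)) =
      (hq x y z WLp.M + hq x y z WRm.M) / 2 - lam * (hq x y z FR - hq x y z FL)
        + Δt / 2 * (hq x y z (bgkSource τ WLp.M) + hq x y z (bgkSource τ WRm.M)) := by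
    simp only [hq]; ring
  rw [eN]
  rw [← hdLp, ← hdLm] at sL3
  rw [← hdRp, ← hdRm] at sR3
  rw [← hdLp] at sL1
  rw [← hdLm] at sL2
  rw [← hdRp] at sR1
  rw [← hdRm] at sR2
  have bL := (flux_bounds dLp dLm _ _ _ _ sL1 sL2 sL3
    (uC dLp (hdLp ▸ le_max_left _ _)) (lC dLm (hdLm ▸ min_le_left _ _))
    (uA dLp (hdLp ▸ le_max_right _ _)) (lA dLm (hdLm ▸ min_le_right _ _))).2
  have bR := (flux_bounds dRp dRm _ _ _ _ sR1 sR2 sR3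
    (uB dRp (hdRp ▸ le_max_left _ _)) (lB dRm (hdRm ▸ min_le_left _ _))
    (uD dRp (hdRp ▸ le_max_right _ _)) (lD dRm (hdRm ▸ min_le_right _ _))).1
  rw [← hll_hq, ← hFL] at bL
  rw [← hll_hq, ← hFR] at bR
  have cL := cell lam (-dLm) _ Δt μ _ _ hl (by linarith) hΔt hμ qA hL hCFL_L
  have cR := cell lam dRp _ Δt μ _ _ hl (by linarith) hΔt hμ qB hR hCFL_R
  have mL := mul_le_mul_of_nonneg_left bL hl
  have mR := mul_le_mul_of_nonneg_left bR hl
  linarith
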